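/- arXiv:2111.14492 — 4 statements merged into one kernel-verified Lean document; each statement's English description precedes it below -/
import Mathlib

section
/- For every natural number m ≥ 1, the following two polynomial identities in the indeterminate x hold: det( C(x+m+i+j, m+j) )_{i,j=0}^{m-1} = r_{2m}(x) and det( C(x+m+i+j, m+j) )_{i,j=0}^{m} = r_{2m+1}(x), where C(x+a, b) denotes the generalized binomial coefficient polynomial (x+a)(x+a-1)⋯(x+a-b+1)/b!. -/
/-!
The `(i, j)` entry of either matrix is
`(x+i+1)(x+i+2)⋯(x+i+m+j) / (m+j)!`. Its first `m` factors depend only on the row, the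
denominator depends only on the column, and what is left is the rising factorial of length `j`
at `x+m+1+i`, a monic polynomial of degree `j` in the node `x+m+1+i`. So the remaining
determinant is a Vandermonde determinant with consecutive nodes, whose value is a superfactorial
(`det_risingProd`), and for size `n` the determinant equals
`∏_{i<n} ∏_{l<m} (x+i+l+1)/(i+l+1)` (`det_choose_eq_prod`).

It remains to count how often `i+l+1 = j` in an `m × m`, resp. `(m+1) × m`, rectangle. Passing
from `k` to `k+1` raises the exponent `min j (k-j)` by one exactly for `k/2 < j ≤ k`
(`prod_pow_min_succ`), and these are the values of `i+l+1` along the row or column by which the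
rectangle grows (`prod_rectangle`).
-/

/-- The rational function `r_k(x) = ∏_{j=1}^k ((x+j)/j)^(min(j,k-j))`. -/
noncomputable def r (k : ℕ) : RatFunc ℚ :=
  ∏ j ∈ Finset.Icc 1 k, ((RatFunc.X + (j : RatFunc ℚ)) / (j : RatFunc ℚ)) ^ (min j (k - j))

/-- The generalized binomial coefficient `C(p(x), b) = p(x)(p(x)-1)⋯(p(x)-b+1)/b!`
for a polynomial `p` over `ℚ`. -/
noncomputable def polyChoose (p : Polynomial ℚ) (b : ℕ) : Polynomial ℚ :=
  Polynomial.C ((b.factorial : ℚ))⁻¹ * ∏ l ∈ Finset.range b, (p - (l : Polynomial ℚ))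

section Determinant

variable {K : Type*} [Field K]

lemma eval_ascPochhammer_eq_prod (j : ℕ) (y : K) :
    (ascPochhammer K j).eval y = ∏ l ∈ Finset.range j, (y + l) := by
  induction j with
  | zero => simp
  | succ j ih => simp [ascPochhammer_succ_right, Finset.prod_range_succ, ih]

/-- Rising factorials are monic of degree their length, so their determinant at consecutive
nodes is the Vandermonde determinant of these nodes, which is translation invariant. -/
lemma det_risingProd (n : ℕ) (y : K) :
    (Matrix.of fun i j : Fin (n + 1) => ∏ l ∈ Finset.range j.val, ((i.val : K) + y + l)).det
      = ∏ i ∈ Finset.range (n + 1), (i.factorial : K) := by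
  have h := Matrix.det_eval_matrixOfPolynomials_eq_det_vandermonde
    (fun i : Fin (n + 1) => (i.val : K) + y) (fun j => ascPochhammer K j.val)
    (fun j => ascPochhammer_natDegree _ _) (fun j => monic_ascPochhammer _ _)
  simp only [eval_ascPochhammer_eq_prod] at h
  rw [← h, Matrix.det_vandermonde_add (fun i : Fin (n + 1) => (i.val : K)),
    Matrix.det_vandermonde_id_eq_superFactorial, ← Nat.prod_range_succ_factorial]
  push_cast
  rfl

lemma factorial_add_eq_prod (i m : ℕ) :
    ((m + i).factorial : K) = i.factorial * ∏ l ∈ Finset.range m, ((i + l + 1 : ℕ) : K) := by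
  induction m with
  | zero => simp
  | succ m ih =>
    rw [Finset.prod_range_succ, ← mul_assoc, ← ih, Nat.add_right_comm, Nat.factorial_succ,
      add_comm m i]
    push_cast
    ring

lemma det_choose_eq_prod [CharZero K] (m n : ℕ) (x : K) :
    (Matrix.of fun i j : Fin (n + 1) =>
      ((m + j.val).factorial : K)⁻¹ *
        ∏ l ∈ Finset.range (m + j.val), (x + ((i.val + l + 1 : ℕ) : K))).det
      = ∏ i ∈ Finset.range (n + 1), ∏ l ∈ Finset.range m,
          ((x + ((i + l + 1 : ℕ) : K)) / ((i + l + 1 : ℕ) : K)) := by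
  -- the first `m` factors form the row factor, the others a rising factorial at `i + (x + m + 1)`
  have hentry : (Matrix.of fun i j : Fin (n + 1) =>
      ((m + j.val).factorial : K)⁻¹ *
        ∏ l ∈ Finset.range (m + j.val), (x + ((i.val + l + 1 : ℕ) : K)))
      = Matrix.of fun i j : Fin (n + 1) => ((m + j.val).factorial : K)⁻¹ *
        (Matrix.of fun i j : Fin (n + 1) =>
          (∏ l ∈ Finset.range m, (x + ((i.val + l + 1 : ℕ) : K))) *
          (Matrix.of fun i j : Fin (n + 1) =>
            ∏ l ∈ Finset.range j.val, ((i.val : K) + (x + m + 1) + l)) i j) i j := by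
    ext i j
    simp only [Matrix.of_apply, Finset.prod_range_add]
    congr 2
    refine Finset.prod_congr rfl fun l _ => ?_
    push_cast
    ring
  rw [hentry, Matrix.det_mul_row (fun j : Fin (n + 1) => ((m + j.val).factorial : K)⁻¹),
    Matrix.det_mul_column
      (fun i : Fin (n + 1) => ∏ l ∈ Finset.range m, (x + ((i.val + l + 1 : ℕ) : K))),
    det_risingProd,
    Fin.prod_univ_eq_prod_range (fun j => ((m + j).factorial : K)⁻¹),
    Fin.prod_univ_eq_prod_range
      (fun i => ∏ l ∈ Finset.range m, (x + ((i + l + 1 : ℕ) : K))),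
    ← Finset.prod_mul_distrib, ← Finset.prod_mul_distrib]
  refine Finset.prod_congr rfl fun i _ => ?_
  have hi : (i.factorial : K) ≠ 0 := Nat.cast_ne_zero.mpr i.factorial_ne_zero
  have hprod : ∏ l ∈ Finset.range m, ((i + l + 1 : ℕ) : K) ≠ 0 :=
    Finset.prod_ne_zero_iff.mpr fun l _ => Nat.cast_ne_zero.mpr (by omega)
  rw [factorial_add_eq_prod, Finset.prod_div_distrib]
  field_simp

end Determinant

section Counting

variable {M : Type*} [CommMonoid M]

lemma prod_pow_min_succ (f : ℕ → M) (k : ℕ) :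
    ∏ j ∈ Finset.Icc 1 (k + 1), f j ^ min j (k + 1 - j)
      = (∏ j ∈ Finset.Icc 1 k, f j ^ min j (k - j)) * ∏ j ∈ Finset.Ioc (k / 2) k, f j := by
  have hIoc : Finset.Ioc (k / 2) k = (Finset.Icc 1 k).filter fun j => k / 2 < j := by
    ext j
    simp only [Finset.mem_Ioc, Finset.mem_filter, Finset.mem_Icc]
    omega
  rw [Finset.prod_Icc_succ_top (by omega), hIoc, Finset.prod_filter, ← Finset.prod_mul_distrib]
  simp only [Nat.sub_self, Nat.min_zero, pow_zero, mul_one]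
  refine Finset.prod_congr rfl fun j hj => ?_
  rw [Finset.mem_Icc] at hj
  split_ifs with h
  · rw [← pow_succ]
    congr 1
    omega
  · rw [mul_one]
    congr 1
    omega

lemma prod_Ioc_eq_prod_range (f : ℕ → M) (a b : ℕ) :
    ∏ j ∈ Finset.Ioc a (a + b), f j = ∏ l ∈ Finset.range b, f (a + l + 1) := by
  induction b with
  | zero => simp
  | succ b ih => rw [← add_assoc, Finset.prod_Ioc_succ_top (by omega), ih, Finset.prod_range_succ]

/-- In an `m × m` (resp. `(m+1) × m`) rectangle, `i+l+1` takes the value `j` exactly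
`min j (k-j)` times, where `k = 2m` (resp. `k = 2m+1`). -/
lemma prod_rectangle (f : ℕ → M) (m : ℕ) :
    (∏ i ∈ Finset.range m, ∏ l ∈ Finset.range m, f (i + l + 1)
      = ∏ j ∈ Finset.Icc 1 (2 * m), f j ^ min j (2 * m - j)) ∧
    (∏ i ∈ Finset.range (m + 1), ∏ l ∈ Finset.range m, f (i + l + 1)
      = ∏ j ∈ Finset.Icc 1 (2 * m + 1), f j ^ min j (2 * m + 1 - j)) := by
  -- adding the row `i = m` to the square
  have hrow : ∀ m : ℕ, (∏ i ∈ Finset.range m, ∏ l ∈ Finset.range m, f (i + l + 1)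
      = ∏ j ∈ Finset.Icc 1 (2 * m), f j ^ min j (2 * m - j)) →
      (∏ i ∈ Finset.range (m + 1), ∏ l ∈ Finset.range m, f (i + l + 1)
        = ∏ j ∈ Finset.Icc 1 (2 * m + 1), f j ^ min j (2 * m + 1 - j)) := by
    intro m h
    rw [prod_pow_min_succ, Finset.prod_range_succ, h, ← prod_Ioc_eq_prod_range]
    congr 3 <;> omega
  have hsq : ∏ i ∈ Finset.range m, ∏ l ∈ Finset.range m, f (i + l + 1)
      = ∏ j ∈ Finset.Icc 1 (2 * m), f j ^ min j (2 * m - j) := by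
    induction m with
    | zero => simp
    | succ m ih =>
      -- adding the column `l = m` to the rectangle
      have hcol : ∏ i ∈ Finset.range (m + 1), f (i + m + 1)
          = ∏ j ∈ Finset.Ioc ((2 * m + 1) / 2) (2 * m + 1), f j := by
        have h1 : (2 * m + 1) / 2 = m := by omega
        have h2 : 2 * m + 1 = m + (m + 1) := by omega
        rw [h1, h2, prod_Ioc_eq_prod_range]
        exact Finset.prod_congr rfl fun i _ => by rw [add_comm i m]
      rw [show 2 * (m + 1) = 2 * m + 1 + 1 by ring, prod_pow_min_succ, ← hrow m ih, ← hcol,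
        ← Finset.prod_mul_distrib]
      exact Finset.prod_congr rfl fun i _ => Finset.prod_range_succ _ _
  exact ⟨hsq, hrow m hsq⟩

end Counting

/-- Reversing the order of the factors turns the falling product defining the binomial
coefficient into a rising one. -/
lemma algebraMap_polyChoose (m i j : ℕ) :
    algebraMap (Polynomial ℚ) (RatFunc ℚ)
        (polyChoose (Polynomial.X + ((m + i + j : ℕ) : Polynomial ℚ)) (m + j))
      = ((m + j).factorial : RatFunc ℚ)⁻¹ *
        ∏ l ∈ Finset.range (m + j), (RatFunc.X + ((i + l + 1 : ℕ) : RatFunc ℚ)) := by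
  rw [polyChoose, ← Finset.prod_range_reflect, map_mul, map_prod, RatFunc.algebraMap_C, map_inv₀,
    map_natCast]
  congr 1
  refine Finset.prod_congr rfl fun l hl => ?_
  rw [Finset.mem_range] at hl
  have hN : m + i + j = (i + l + 1) + (m + j - 1 - l) := by omega
  rw [hN, map_sub, map_add, map_natCast, map_natCast, RatFunc.algebraMap_X]
  push_cast
  ring

lemma algebraMap_det (m n : ℕ) :
    algebraMap (Polynomial ℚ) (RatFunc ℚ)
        (Matrix.det (Matrix.of fun i j : Fin (n + 1) =>
          polyChoose (Polynomial.X + ((m + i.val + j.val : ℕ) : Polynomial ℚ)) (m + j.val)))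
      = ∏ i ∈ Finset.range (n + 1), ∏ l ∈ Finset.range m,
          ((RatFunc.X + ((i + l + 1 : ℕ) : RatFunc ℚ)) / ((i + l + 1 : ℕ) : RatFunc ℚ)) := by
  rw [RingHom.map_det, ← det_choose_eq_prod]
  congr 1
  ext i j
  exact algebraMap_polyChoose m i.val j.val

/-- For `m ≥ 1` the polynomial identities
`det(C(x+m+i+j, m+j))_{i,j=0}^{m-1} = r_{2m}(x)` and
`det(C(x+m+i+j, m+j))_{i,j=0}^{m} = r_{2m+1}(x)` hold. -/
theorem stmt9 (m : ℕ) (hm : 1 ≤ m) :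
    (algebraMap (Polynomial ℚ) (RatFunc ℚ)
        (Matrix.det (Matrix.of fun i j : Fin m =>
          polyChoose (Polynomial.X + ((m + i.val + j.val : ℕ) : Polynomial ℚ)) (m + j.val)))
      = r (2 * m))
    ∧
    (algebraMap (Polynomial ℚ) (RatFunc ℚ)
        (Matrix.det (Matrix.of fun i j : Fin (m + 1) =>
          polyChoose (Polynomial.X + ((m + i.val + j.val : ℕ) : Polynomial ℚ)) (m + j.val)))
      = r (2 * m + 1)) := by
  have hrect := prod_rectangle
    (fun j => (RatFunc.X + (j : RatFunc ℚ)) / (j : RatFunc ℚ)) m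
  refine ⟨?_, (algebraMap_det m m).trans hrect.2⟩
  obtain ⟨n, rfl⟩ : ∃ n, m = n + 1 := ⟨m - 1, by omega⟩
  exact (algebraMap_det (n + 1) n).trans hrect.1
end

section
/- For every natural number n ≥ 1, the n×n Hankel determinant det( b_{i+j}(t) )_{i,j=0}^{n-1} equals t^{⌊n²/4⌋}, as an identity in the polynomial ring ℤ[t]. -/
/-!
The polynomial `b_n` is the `n`-th moment of a Jacobi-type continued fraction: it is the weighted
count of lattice paths of length `n` from height `0` to height `0` with up and down steps, and
level steps at height `0` only, where a down step has weight `t` if it starts at an odd height and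
`1` otherwise. This holds because the weighted count `L n k` of the paths ending at height `k`
(`pathPoly`) has as coefficients explicit products of two binomials (`pathPoly_coeff`), which
satisfy the path recursion by Pascal's rule.

Cutting a path of length `i + j` after `i` steps gives `b_{i+j} = ∑ k, L i k * L j k * h k`, with
`h k = t ^ ⌊(k+1)/2⌋` the product of the weights of the down steps from heights `1, …, k`
(`sum_pathPoly_mul`). So the Hankel matrix is `L D Lᵀ` with `L` lower unitriangular and
`D = diag(h)`, and its determinant is `∏ k < n, h k = t ^ ⌊n²/4⌋`.
-/

/-- The polynomial `b_n(t) = Σ_{j=0}^{⌊n/2⌋} C(⌊n/2⌋,j)·C(⌊(n+1)/2⌋,j)·t^j` in `ℤ[t]`. -/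
noncomputable def bpoly (n : ℕ) : Polynomial ℤ :=
  ∑ j ∈ Finset.range (n / 2 + 1),
    Polynomial.C (((n / 2).choose j * ((n + 1) / 2).choose j : ℕ) : ℤ) * Polynomial.X ^ j

open Polynomial in
/-- The total weight of the lattice paths of length `n` from height `0` to height `k` that stay
at height `≥ 0`, with up steps of weight `1`, level steps allowed only at height `0` and of
weight `1`, and down steps of weight `X` from odd heights and `1` from even heights. -/
noncomputable def pathPoly : ℕ → ℕ → ℤ[X]
  | 0, 0 => 1
  | 0, _ + 1 => 0
  | n + 1, 0 => pathPoly n 0 + X * pathPoly n 1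
  | n + 1, k + 1 => pathPoly n k + (if Even k then 1 else X) * pathPoly n (k + 2)

/-- The closed form of `pathPoly` at each of the four parities of length and height. -/
theorem pathPoly_coeff (m : ℕ) :
    (∀ l j, (pathPoly (2 * m) (2 * l)).coeff j = (m.choose j * m.choose (j + l) : ℕ)) ∧
    (∀ l j, (pathPoly (2 * m) (2 * l + 1)).coeff j
      = (m.choose j * m.choose (j + l + 1) : ℕ)) ∧
    (∀ l j, (pathPoly (2 * m + 1) (2 * l)).coeff j
      = (m.choose (j + l) * (m + 1).choose j : ℕ)) ∧
    (∀ l j, (pathPoly (2 * m + 1) (2 * l + 1)).coeff j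
      = (m.choose j * (m + 1).choose (j + l + 1) : ℕ)) := by
  -- A step from even to odd length is Pascal's rule for the second binomial.
  have odd_of_even : ∀ m : ℕ,
      (∀ l j, (pathPoly (2 * m) (2 * l)).coeff j = (m.choose j * m.choose (j + l) : ℕ)) →
      (∀ l j, (pathPoly (2 * m) (2 * l + 1)).coeff j
        = (m.choose j * m.choose (j + l + 1) : ℕ)) →
      (∀ l j, (pathPoly (2 * m + 1) (2 * l)).coeff j
        = (m.choose (j + l) * (m + 1).choose j : ℕ)) ∧
      (∀ l j, (pathPoly (2 * m + 1) (2 * l + 1)).coeff j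
        = (m.choose j * (m + 1).choose (j + l + 1) : ℕ)) := by
    intro m he ho
    refine ⟨fun l j => ?_, fun l j => ?_⟩
    · rcases l with _ | l
      · have h0 := he 0 j
        simp only [mul_zero, pathPoly, Polynomial.coeff_add] at h0 ⊢
        rcases j with _ | j
        · simp [h0]
        · have h1 := ho 0 j
          simp only [mul_zero, zero_add] at h1
          rw [Polynomial.coeff_X_mul, h0, h1]
          simp only [Nat.choose_succ_succ m j, add_zero]
          push_cast; ring
      · have h0 := ho l j
        have hk : ¬ Even (2 * l + 1) := by simp
        rw [show 2 * (l + 1) = (2 * l + 1) + 1 by ring, pathPoly, if_neg hk,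
          Polynomial.coeff_add, h0]
        rcases j with _ | j
        · simp
        · have h1 := ho (l + 1) j
          rw [show 2 * (l + 1) + 1 = 2 * l + 1 + 2 by ring] at h1
          rw [Polynomial.coeff_X_mul, h1, Nat.choose_succ_succ m j,
            show j + (l + 1) + 1 = j + 1 + (l + 1) by ring,
            show j + 1 + l + 1 = j + 1 + (l + 1) by ring]
          push_cast; ring
    · have h1 := he (l + 1) j
      rw [show 2 * (l + 1) = 2 * l + 2 by ring] at h1
      rw [pathPoly, if_pos (even_two_mul l), one_mul, Polynomial.coeff_add, he, h1,
        Nat.choose_succ_succ m (j + l), ← add_assoc]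
      push_cast; ring
  induction m with
  | zero =>
    have he : ∀ l j, (pathPoly (2 * 0) (2 * l)).coeff j
        = (Nat.choose 0 j * Nat.choose 0 (j + l) : ℕ) := by
      intro l j
      rcases l with _ | l
      · rcases j with _ | j <;> simp [pathPoly, Polynomial.coeff_one]
      · simp [pathPoly, Nat.mul_succ, ← add_assoc]
    have ho : ∀ l j, (pathPoly (2 * 0) (2 * l + 1)).coeff j
        = (Nat.choose 0 j * Nat.choose 0 (j + l + 1) : ℕ) := by
      intro l j
      simp [pathPoly]
    exact ⟨he, ho, odd_of_even 0 he ho⟩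
  | succ m ih =>
    obtain ⟨-, -, he, ho⟩ := ih
    -- From odd to even length, Pascal's rule applies to the binomial with upper index `m`.
    have he' : ∀ l j, (pathPoly (2 * (m + 1)) (2 * l)).coeff j
        = ((m + 1).choose j * (m + 1).choose (j + l) : ℕ) := by
      intro l j
      rw [show 2 * (m + 1) = 2 * m + 1 + 1 by ring]
      rcases l with _ | l
      · have h0 := he 0 j
        rw [mul_zero] at h0 ⊢
        rw [pathPoly, Polynomial.coeff_add, h0]
        rcases j with _ | j
        · simp
        · have h1 := ho 0 j
          simp only [mul_zero, zero_add] at h1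
          rw [Polynomial.coeff_X_mul, h1]
          simp only [Nat.choose_succ_succ m j, add_zero]
          push_cast; ring
      · have h0 := ho l j
        have hk : ¬ Even (2 * l + 1) := by simp
        rw [show 2 * (l + 1) = (2 * l + 1) + 1 by ring, pathPoly, if_neg hk,
          Polynomial.coeff_add, h0]
        rcases j with _ | j
        · simp
        · have h1 := ho (l + 1) j
          rw [show 2 * (l + 1) + 1 = 2 * l + 1 + 2 by ring] at h1
          rw [Polynomial.coeff_X_mul, h1, Nat.choose_succ_succ m j,
            show j + (l + 1) + 1 = j + 1 + (l + 1) by ring,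
            show j + 1 + l + 1 = j + 1 + (l + 1) by ring]
          push_cast; ring
    have ho' : ∀ l j, (pathPoly (2 * (m + 1)) (2 * l + 1)).coeff j
        = ((m + 1).choose j * (m + 1).choose (j + l + 1) : ℕ) := by
      intro l j
      have h1 := he (l + 1) j
      rw [show 2 * (l + 1) = 2 * l + 2 by ring] at h1
      rw [show 2 * (m + 1) = 2 * m + 1 + 1 by ring, pathPoly, if_pos (even_two_mul l), one_mul,
        Polynomial.coeff_add, he, h1, Nat.choose_succ_succ m (j + l), ← add_assoc]
      push_cast; ring
    exact ⟨he', ho', odd_of_even (m + 1) he' ho'⟩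

theorem bpoly_coeff (n j : ℕ) :
    (bpoly n).coeff j = ((n / 2).choose j * ((n + 1) / 2).choose j : ℕ) := by
  simp only [bpoly, Polynomial.finsetSum_coeff, Polynomial.coeff_C_mul, Polynomial.coeff_X_pow]
  rcases le_or_gt j (n / 2) with h | h
  · simp [Nat.lt_succ_of_le h]
  · simp [Nat.choose_eq_zero_of_lt h]

theorem pathPoly_zero_right (n : ℕ) : pathPoly n 0 = bpoly n := by
  ext j
  rw [bpoly_coeff]
  obtain ⟨m, rfl | rfl⟩ := n.even_or_odd'
  · have h := (pathPoly_coeff m).1 0 j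
    rw [show (2 * m + 1) / 2 = m by omega, show 2 * m / 2 = m by omega]
    simpa using h
  · have h := (pathPoly_coeff m).2.2.1 0 j
    rw [show (2 * m + 1 + 1) / 2 = m + 1 by omega, show (2 * m + 1) / 2 = m by omega]
    simpa using h

theorem pathPoly_eq_zero {n k : ℕ} (h : n < k) : pathPoly n k = 0 := by
  induction n generalizing k with
  | zero => obtain ⟨k, rfl⟩ := Nat.exists_eq_succ_of_ne_zero h.ne'; rfl
  | succ n ih =>
    obtain ⟨k, rfl⟩ := Nat.exists_eq_succ_of_ne_zero (Nat.ne_zero_of_lt h)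
    rw [pathPoly, ih (by omega), ih (by omega)]; simp

theorem pathPoly_self (n : ℕ) : pathPoly n n = 1 := by
  induction n with
  | zero => rfl
  | succ n ih => rw [pathPoly, ih, pathPoly_eq_zero (by omega)]; simp

/-- A Christoffel–Darboux identity: the tridiagonal operator defining `pathPoly` is self-adjoint
for the weights `X ^ ((k + 1) / 2)`, up to a boundary term at the truncation height. -/
theorem pathPoly_shift (i j N : ℕ) :
    ∑ k ∈ Finset.range (N + 1),
        pathPoly (i + 1) k * pathPoly j k * Polynomial.X ^ ((k + 1) / 2)
      = ∑ k ∈ Finset.range (N + 1),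
        pathPoly i k * pathPoly (j + 1) k * Polynomial.X ^ ((k + 1) / 2)
      + Polynomial.X ^ ((N + 2) / 2) * (pathPoly i (N + 1) * pathPoly j N
        - pathPoly i N * pathPoly j (N + 1)) := by
  induction N with
  | zero => simp [pathPoly]; ring
  | succ N ih =>
    rw [Finset.sum_range_succ, ih, Finset.sum_range_succ _ (N + 1)]
    simp only [pathPoly]
    obtain ⟨m, rfl | rfl⟩ := N.even_or_odd'
    · rw [if_pos (even_two_mul m), show (2 * m + 2) / 2 = m + 1 by omega,
        show (2 * m + 1 + 2) / 2 = m + 1 by omega]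
      ring
    · rw [if_neg (by simp), show (2 * m + 1 + 2) / 2 = m + 1 by omega,
        show (2 * m + 1 + 1 + 2) / 2 = m + 2 by omega]
      ring

/-- Cutting a path of length `i + j` that ends at height `0` after `i` steps; the weight
`X ^ ((k + 1) / 2)` accounts for reversing the second piece, which starts at height `k`. -/
theorem sum_pathPoly_mul (i j N : ℕ) (h : i + j ≤ N) :
    ∑ k ∈ Finset.range (N + 1), pathPoly i k * pathPoly j k * Polynomial.X ^ ((k + 1) / 2)
      = bpoly (i + j) := by
  induction i generalizing j with
  | zero =>
    rw [Finset.sum_range_succ', Finset.sum_eq_zero (fun k _ => by simp [pathPoly])]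
    simp [pathPoly, pathPoly_zero_right]
  | succ i ih =>
    rw [pathPoly_shift, ih (j + 1) (by omega), pathPoly_eq_zero (n := i) (by omega),
      pathPoly_eq_zero (n := j) (k := N + 1) (by omega), show i + (j + 1) = i + 1 + j by ring]
    simp

theorem sum_range_half (n : ℕ) : ∑ k ∈ Finset.range n, (k + 1) / 2 = n ^ 2 / 4 := by
  induction n with
  | zero => rfl
  | succ n ih =>
    rw [Finset.sum_range_succ, ih]
    obtain ⟨m, rfl | rfl⟩ := n.even_or_odd'
    · rw [show (2 * m) ^ 2 = 4 * m ^ 2 by ring,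
        show (2 * m + 1) ^ 2 = 4 * m ^ 2 + 4 * m + 1 by ring]
      omega
    · rw [show (2 * m + 1) ^ 2 = 4 * m ^ 2 + 4 * m + 1 by ring,
        show (2 * m + 1 + 1) ^ 2 = 4 * m ^ 2 + 8 * m + 4 by ring]
      omega

/-- For `n ≥ 1`, the `n×n` Hankel determinant `det(b_{i+j}(t))_{i,j=0}^{n-1}`
equals `t^(⌊n²/4⌋)` in `ℤ[t]`. -/
theorem stmt16 (n : ℕ) (hn : 1 ≤ n) :
    Matrix.det (Matrix.of fun i j : Fin n => bpoly (i.val + j.val))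
      = Polynomial.X ^ (n ^ 2 / 4) := by
  set A : Matrix (Fin n) (Fin n) (Polynomial ℤ) := Matrix.of fun i k => pathPoly i.val k.val
    with hA
  have hdet : A.det = 1 := by
    rw [Matrix.det_of_isLowerTriangular]
    · simp [hA, pathPoly_self]
    · intro i j hij
      exact pathPoly_eq_zero hij
  have hfac : (Matrix.of fun i j : Fin n => bpoly (i.val + j.val))
      = A * Matrix.diagonal (fun k : Fin n => Polynomial.X ^ ((k.val + 1) / 2))
        * A.transpose := by
    ext1 i j
    rw [Matrix.mul_apply]
    simp only [Matrix.mul_diagonal, Matrix.transpose_apply, hA, Matrix.of_apply]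
    rw [← sum_pathPoly_mul i j (2 * n) (by omega),
      Fin.sum_univ_eq_sum_range (fun k => pathPoly i.val k * Polynomial.X ^ ((k + 1) / 2)
        * pathPoly j.val k) n]
    symm
    refine (Finset.sum_subset (fun k hk => ?_) fun k _ hk => ?_).trans
      (Finset.sum_congr rfl fun k _ => mul_right_comm _ _ _)
    · simp only [Finset.mem_range] at hk ⊢; omega
    · rw [Finset.mem_range, not_lt] at hk
      rw [pathPoly_eq_zero (i.isLt.trans_le hk)]; simp
  rw [hfac, Matrix.det_mul, Matrix.det_mul, Matrix.det_transpose, hdet, Matrix.det_diagonal,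
    Fin.prod_univ_eq_prod_range (fun k => (Polynomial.X : Polynomial ℤ) ^ ((k + 1) / 2)) n,
    Finset.prod_pow_eq_pow_sum, sum_range_half]
  simp
end

section
/- For every natural number n ≥ 1, the n×n Hankel determinant det( b_{1+i+j}(t) )_{i,j=0}^{n-1} equals (-1)^{⌊n/2⌋}·t^{⌊n/2⌋·(⌊n/2⌋+1)}, as an identity in the polynomial ring ℤ[t]; equivalently, writing m = ⌊n/2⌋, it equals (-1)^m t^{m²+m} both for n = 2m and for n = 2m+1. -/
namespace BHankel

open LaurentPolynomial Finset

variable {R : Type*} [CommRing R]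

/-- Determinant recursion for a symmetric tridiagonal matrix whose diagonal vanishes off the corner
`(0, 0)`: expand along the last row and then along the last column. -/
theorem det_tridiag_step (g : ℕ → ℕ → R) (hfar : ∀ k l, k + 2 ≤ l → g k l = 0)
    (hsym : ∀ k l, g k l = g l k) (hdiag : ∀ k, g (k + 1) (k + 1) = 0) (n : ℕ) :
    Matrix.det (Matrix.of fun i j : Fin (n + 2) => g i j) =
      -(g n (n + 1)) ^ 2 * Matrix.det (Matrix.of fun i j : Fin n => g i j) := by
  rw [Matrix.det_succ_row _ (Fin.last _), Fin.sum_univ_castSucc, Fin.sum_univ_castSucc]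
  have h0 : ∀ j : Fin n, g (n + 1) j = 0 := fun j => by
    rw [hsym]; exact hfar _ _ (by omega)
  have h0' : ∀ j : Fin n, g j (n + 1) = 0 := fun j => hfar _ _ (by omega)
  simp only [Matrix.of_apply, Fin.val_last, Fin.val_castSucc, h0, hdiag, mul_zero, zero_mul,
    sum_const_zero, zero_add, add_zero]
  rw [Matrix.det_succ_column _ (Fin.last _), Fin.sum_univ_castSucc]
  have hl : ((Fin.last n).castSucc).succAbove (Fin.last n) = Fin.last (n + 1) := by
    simp [Fin.succAbove]
  have hc : ∀ j : Fin n, ((Fin.last n).castSucc).succAbove j.castSucc = j.castSucc.castSucc :=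
    fun j => by simp [Fin.succAbove, Fin.lt_def]
  simp only [Matrix.submatrix_apply, Matrix.of_apply, Fin.succAbove_last, hl, Fin.val_last,
    Fin.val_castSucc, h0', mul_zero, zero_mul, sum_const_zero, zero_add]
  have hM : ((Matrix.of fun i j : Fin (n + 2) => g i j).submatrix Fin.castSucc
      (Fin.last n).castSucc.succAbove).submatrix Fin.castSucc Fin.castSucc
      = Matrix.of fun i j : Fin n => g i j := by
    ext i j
    simp [hc]
  have e1 : (-1 : R) ^ (n + 1 + n) = -1 := Odd.neg_one_pow ⟨n, by ring⟩
  have e2 : (-1 : R) ^ (n + n) = 1 := Even.neg_one_pow ⟨n, rfl⟩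
  rw [hM, e1, e2, hsym (n + 1) n]
  ring

/-- The Laurent polynomial `1 + x`. -/
noncomputable def u : R[T;T⁻¹] := 1 + T 1

/-- The Laurent polynomial `1 + t / x`. -/
noncomputable def v (t : R) : R[T;T⁻¹] := 1 + t • T (-1)

theorem coeff_upow_vpow (t : R) (p q : ℕ) (m : ℤ) :
    (u ^ p * v t ^ q).coeff m = ∑ j ∈ range (p + 1), ∑ k ∈ range (q + 1),
      if (j : ℤ) - k = m then (p.choose j * q.choose k : R) * t ^ k else 0 := by
  have hu : (u : R[T;T⁻¹]) ^ p = ∑ j ∈ range (p + 1), (p.choose j : R) • T (j : ℤ) := by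
    rw [u, add_comm, add_pow]
    refine sum_congr rfl fun j _ => ?_
    rw [T_pow, one_pow, mul_one, mul_one, mul_comm, ← nsmul_eq_mul, Nat.cast_smul_eq_nsmul]
  have hv : v t ^ q = ∑ k ∈ range (q + 1), ((q.choose k : R) * t ^ k) • T (-(k : ℤ)) := by
    rw [v, add_comm, add_pow]
    refine sum_congr rfl fun k _ => ?_
    rw [smul_pow, T_pow, one_pow, mul_one, mul_neg_one, mul_comm, ← nsmul_eq_mul, mul_smul,
      Nat.cast_smul_eq_nsmul]
  rw [hu, hv, sum_mul_sum, AddMonoidAlgebra.coeff_sum, Finsupp.finsetSum_apply]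
  refine sum_congr rfl fun j _ => ?_
  rw [AddMonoidAlgebra.coeff_sum, Finsupp.finsetSum_apply]
  refine sum_congr rfl fun k _ => ?_
  rw [smul_mul_smul_comm, ← T_add, ← sub_eq_add_neg]
  simp [mul_assoc]

theorem coeff_nonneg (t : R) (p q c : ℕ) :
    (u ^ p * v t ^ q).coeff (c : ℤ) =
      ∑ k ∈ range (q + 1), (p.choose (k + c) * q.choose k : R) * t ^ k := by
  rw [coeff_upow_vpow, sum_comm]
  refine sum_congr rfl fun k _ => ?_
  have : ∀ j : ℕ, ((j : ℤ) - k = c) ↔ j = k + c := fun j => by omega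
  simp only [this, sum_ite_eq', mem_range]
  split_ifs with h
  · rfl
  · simp [Nat.choose_eq_zero_of_lt (show p < k + c by omega)]

theorem coeff_neg (t : R) (p q d : ℕ) :
    (u ^ p * v t ^ q).coeff (-(d : ℤ)) =
      ∑ j ∈ range (p + 1), (p.choose j * q.choose (j + d) : R) * t ^ (j + d) := by
  rw [coeff_upow_vpow]
  refine sum_congr rfl fun j _ => ?_
  have : ∀ k : ℕ, ((j : ℤ) - k = -d) ↔ k = j + d := fun j => by omega
  simp only [this, sum_ite_eq', mem_range]
  split_ifs with h
  · rfl
  · simp [Nat.choose_eq_zero_of_lt (show q < j + d by omega)]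

/-- The exponents `0, 1, -1, 2, -2, …` of the monomials `e k`; a bijection `ℕ → ℤ`. -/
def expo (k : ℕ) : ℤ := if k % 2 = 0 then -(k / 2 : ℕ) else ((k + 1) / 2 : ℕ)

/-- The coefficient of the monomial `e k`: `t ^ (k / 2)` for even `k` and `1` for odd `k`. -/
def wt (t : R) (k : ℕ) : R := if k % 2 = 0 then t ^ (k / 2) else 1

/-- The monomials `1, x, t/x, x², (t/x)², …`. -/
noncomputable def e (t : R) (k : ℕ) : R[T;T⁻¹] := wt t k • T (expo k)

/-- The Laurent polynomials `u ^ ⌈i/2⌉ * v ^ ⌊i/2⌋`. -/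
noncomputable def f (t : R) (i : ℕ) : R[T;T⁻¹] := u ^ ((i + 1) / 2) * v t ^ (i / 2)

/-- The coefficient of `e k` in the expansion of `f i`. The factor `wt t k`, which need not be
invertible, has been divided out of the corresponding coefficient of `f i`. -/
def tri (t : R) (i k : ℕ) : R :=
  if k % 2 = 0 then
    ∑ j ∈ range ((i + 1) / 2 + 1),
      (((i + 1) / 2).choose j * (i / 2).choose (j + k / 2) : R) * t ^ j
  else
    ∑ j ∈ range (i / 2 + 1),
      (((i + 1) / 2).choose (j + (k + 1) / 2) * (i / 2).choose j : R) * t ^ j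

theorem tri_mul_wt (t : R) (i k : ℕ) : tri t i k * wt t k = (f t i).coeff (expo k) := by
  unfold tri wt expo f
  split_ifs with h
  · rw [coeff_neg, sum_mul]
    exact sum_congr rfl fun j _ => by ring
  · rw [coeff_nonneg, mul_one]

theorem tri_of_lt (t : R) {i k : ℕ} (h : i < k) : tri t i k = 0 := by
  unfold tri
  split_ifs with hk <;> refine sum_eq_zero fun j _ => ?_
  · simp [Nat.choose_eq_zero_of_lt (show i / 2 < j + k / 2 by omega)]
  · simp [Nat.choose_eq_zero_of_lt (show (i + 1) / 2 < j + (k + 1) / 2 by omega)]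

theorem tri_self (t : R) (i : ℕ) : tri t i i = 1 := by
  unfold tri
  split_ifs with hk <;> rw [sum_eq_single 0]
  · simp
  · intro j _ hj
    simp [Nat.choose_eq_zero_of_lt (show i / 2 < j + i / 2 by omega)]
  · simp
  · simp
  · intro j _ hj
    simp [Nat.choose_eq_zero_of_lt (show (i + 1) / 2 < j + (i + 1) / 2 by omega)]
  · simp

theorem expo_injective : Function.Injective expo := by
  intro a b h
  unfold expo at h
  split_ifs at h <;> omega

theorem expo_surjective : Function.Surjective expo := by
  intro m
  rcases le_or_gt m 0 with h | h
  · refine ⟨2 * m.natAbs, ?_⟩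
    unfold expo
    split_ifs <;> omega
  · refine ⟨2 * m.natAbs - 1, ?_⟩
    unfold expo
    split_ifs <;> omega

theorem f_eq_sum (t : R) {n i : ℕ} (hi : i < n) :
    f t i = ∑ k : Fin n, tri t i k • e t k := by
  ext m
  obtain ⟨l, rfl⟩ := expo_surjective m
  rw [Fin.sum_univ_eq_sum_range (fun k => tri t i k • e t k) n, AddMonoidAlgebra.coeff_sum,
    Finsupp.finsetSum_apply, ← tri_mul_wt]
  simp only [e, AddMonoidAlgebra.coeff_smul, Finsupp.smul_apply, T_apply, smul_eq_mul,
    expo_injective.eq_iff, mul_ite, mul_one, mul_zero, sum_ite_eq', mem_range]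
  split_ifs with h
  · rfl
  · rw [tri_of_lt t (by omega), zero_mul]

/-- The Gram matrix of the `e k` for the bilinear form `⟨p, q⟩ = CT (p * q * v)`. -/
noncomputable def gram (t : R) (k l : ℕ) : R := (e t k * e t l * v t).coeff 0

theorem gram_eq (t : R) (k l : ℕ) : gram t k l = wt t k * wt t l *
    ((if expo k + expo l = 0 then 1 else 0) + if expo k + expo l = 1 then t else 0) := by
  have : ∀ a : ℤ, (a + -1 = 0) ↔ a = 1 := fun a => by omega
  rw [gram, e, e, v, smul_mul_smul_comm, ← T_add, smul_mul_assoc, mul_add, mul_smul_comm, ← T_add,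
    mul_one]
  simp [this, mul_add]

theorem gram_symm (t : R) (k l : ℕ) : gram t k l = gram t l k := by
  rw [gram, gram, mul_comm (e t k)]

theorem gram_far (t : R) (k l : ℕ) (h : k + 2 ≤ l) : gram t k l = 0 := by
  rw [gram_eq, if_neg, if_neg]
  · simp
  all_goals unfold expo; split_ifs <;> omega

theorem gram_diag (t : R) (k : ℕ) : gram t (k + 1) (k + 1) = 0 := by
  rw [gram_eq, if_neg, if_neg]
  · simp
  all_goals unfold expo; split_ifs <;> omega

theorem gram_next (t : R) (k : ℕ) : gram t k (k + 1) = t ^ (k / 2 + 1) := by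
  rw [gram_eq]
  rcases Nat.even_or_odd' k with ⟨a, rfl | rfl⟩
  · have h : expo (2 * a) + expo (2 * a + 1) = 1 := by
      unfold expo; split_ifs <;> omega
    rw [h]
    simp [wt, Nat.add_mod, pow_succ]
  · have h : expo (2 * a + 1) + expo (2 * a + 1 + 1) = 0 := by
      unfold expo; split_ifs <;> omega
    have h1 : (2 * a + 1) / 2 = a := by omega
    have h2 : (2 * a + 1 + 1) / 2 = a + 1 := by omega
    rw [h]
    simp [wt, h1, h2, Nat.add_mod]

theorem det_gram (t : R) : ∀ n : ℕ,
    Matrix.det (Matrix.of fun i j : Fin n => gram t i j) =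
      (-1) ^ (n / 2) * t ^ ((n / 2) * (n / 2 + 1))
  | 0 => by simp
  | 1 => by simp [gram_eq, wt, expo]
  | n + 2 => by
    rw [det_tridiag_step _ (gram_far t) (gram_symm t) (gram_diag t), det_gram t n, gram_next,
      show (n + 2) / 2 = n / 2 + 1 by omega]
    ring

theorem bpoly_eq_coeff (i j : ℕ) :
    bpoly (1 + i + j) =
      (f (Polynomial.X : Polynomial ℤ) i * f Polynomial.X j * v Polynomial.X).coeff 0 := by
  -- Which of the two exponents is the floor of `(1 + i + j) / 2` depends on the parities of `i`, `j`.
  obtain ⟨A, B, hA, hB, h⟩ : ∃ A B : ℕ, (i + 1) / 2 + (j + 1) / 2 = A ∧ i / 2 + j / 2 + 1 = B ∧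
      ((A = (1 + i + j) / 2 ∧ B = (1 + i + j + 1) / 2) ∨
        (B = (1 + i + j) / 2 ∧ A = (1 + i + j + 1) / 2)) :=
    ⟨_, _, rfl, rfl, by omega⟩
  have hf : f (Polynomial.X : Polynomial ℤ) i * f Polynomial.X j * v Polynomial.X
      = u ^ A * v Polynomial.X ^ B := by
    rw [f, f, ← hA, ← hB]; ring
  rw [hf, bpoly]
  rcases h with ⟨h1, h2⟩ | ⟨h1, h2⟩ <;> rw [← h1, ← h2]
  · have := coeff_neg (Polynomial.X : Polynomial ℤ) A B 0
    simp only [Nat.cast_zero, neg_zero, add_zero] at this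
    rw [this]
    simp
  · have := coeff_nonneg (Polynomial.X : Polynomial ℤ) A B 0
    simp only [Nat.cast_zero, add_zero] at this
    rw [this]
    simp [mul_comm]

/-- The change of basis from the `e k` to the `f i` in the bilinear form `CT (p * q * v)`. -/
theorem hankel_eq (t : R) (n : ℕ) :
    (Matrix.of fun i j : Fin n => (f t i * f t j * v t).coeff 0) =
      (Matrix.of fun i k : Fin n => tri t i k) * (Matrix.of fun k l : Fin n => gram t k l) *
        (Matrix.of fun i k : Fin n => tri t i k).transpose := by
  ext i j
  rw [Matrix.mul_assoc]
  simp only [Matrix.of_apply, Matrix.mul_apply, Matrix.transpose_apply]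
  rw [f_eq_sum t i.2, f_eq_sum t j.2, sum_mul_sum, sum_mul, AddMonoidAlgebra.coeff_sum,
    Finsupp.finsetSum_apply]
  refine sum_congr rfl fun k _ => ?_
  rw [sum_mul, AddMonoidAlgebra.coeff_sum, Finsupp.finsetSum_apply, mul_sum]
  refine sum_congr rfl fun l _ => ?_
  rw [smul_mul_smul_comm, smul_mul_assoc, AddMonoidAlgebra.coeff_smul, Finsupp.smul_apply,
    smul_eq_mul, gram]
  ring

theorem det_tri (t : R) (n : ℕ) :
    Matrix.det (Matrix.of fun i k : Fin n => tri t i k) = 1 := by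
  rw [Matrix.det_of_isLowerTriangular]
  · simp [tri_self]
  · intro i k h
    exact tri_of_lt t h

end BHankel

/-- For `n ≥ 1`, the `n×n` Hankel determinant `det(b_{1+i+j}(t))_{i,j=0}^{n-1}`
equals `(-1)^(⌊n/2⌋)·t^(⌊n/2⌋·(⌊n/2⌋+1))` in `ℤ[t]` (writing `m = ⌊n/2⌋`, it equals
`(-1)^m·t^(m²+m)` both for `n = 2m` and for `n = 2m+1`). -/
theorem stmt17 (n : ℕ) (hn : 1 ≤ n) :
    Matrix.det (Matrix.of fun i j : Fin n => bpoly (1 + i.val + j.val))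
      = Polynomial.C ((-1 : ℤ) ^ (n / 2)) * Polynomial.X ^ ((n / 2) * (n / 2 + 1)) := by
  simp_rw [BHankel.bpoly_eq_coeff]
  rw [BHankel.hankel_eq, Matrix.det_mul, Matrix.det_mul, Matrix.det_transpose, BHankel.det_tri,
    BHankel.det_gram]
  simp
end

section
/- For every natural number n ≥ 1, the n×n Hankel determinant det( b_{2+i+j}(t) )_{i,j=0}^{n-1} equals t^{⌊n²/4⌋}·(1 + t + t² + ⋯ + t^n), as an identity in the polynomial ring ℤ[t]. -/
open Polynomial Finset

/-- The sum `∑ j, C(a, j) * C(b, j + m) * X ^ j`. -/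
noncomputable def chooseSum (a b m : ℕ) : ℤ[X] :=
  ∑ j ∈ range (a + 1), ((a.choose j : ℤ[X]) * (b.choose (j + m) : ℤ[X])) * X ^ j

lemma chooseSum_succ_left (a b m : ℕ) :
    chooseSum (a + 1) b m = chooseSum a b m + X * chooseSum a b (m + 1) := by
  have h : chooseSum a b m
      = ∑ j ∈ range (a + 2), ((a.choose j : ℤ[X]) * (b.choose (j + m) : ℤ[X])) * X ^ j := by
    rw [sum_range_succ _ (a + 1)]
    simp [chooseSum]
  rw [h, chooseSum, chooseSum, sum_range_succ' _ (a + 1), sum_range_succ' _ (a + 1), mul_sum,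
    add_right_comm, ← sum_add_distrib]
  congr 1
  · refine sum_congr rfl fun j _ => ?_
    rw [Nat.choose_succ_succ, show j + 1 + m = j + (m + 1) by ring]
    push_cast
    ring
  · simp

lemma chooseSum_succ_right (a b m : ℕ) :
    chooseSum a (b + 1) (m + 1) = chooseSum a b m + chooseSum a b (m + 1) := by
  simp only [chooseSum]
  rw [← sum_add_distrib]
  refine sum_congr rfl fun j _ => ?_
  rw [← add_assoc, Nat.choose_succ_succ]
  push_cast
  ring

lemma chooseSum_succ_self_zero (h : ℕ) : chooseSum (h + 1) h 0 = chooseSum h (h + 1) 0 := by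
  simp only [chooseSum]
  rw [sum_range_succ _ (h + 1)]
  simp [mul_comm]

/-- The weight of a down step from height `k`. -/
noncomputable def downWeight (k : ℕ) : ℤ[X] := if k % 2 = 1 then X else 1

/-- The weighted count of Motzkin paths of length `n` from height `0` to height `k`, with level
steps only at height `0` and down steps weighted by `downWeight`. -/
noncomputable def pathWeight : ℕ → ℕ → ℤ[X]
  | 0, 0 => 1
  | 0, _ + 1 => 0
  | n + 1, 0 => pathWeight n 0 + downWeight 1 * pathWeight n 1
  | n + 1, k + 1 => pathWeight n k + downWeight (k + 2) * pathWeight n (k + 2)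

lemma pathWeight_eq_zero {n k : ℕ} (h : n < k) : pathWeight n k = 0 := by
  induction n generalizing k with
  | zero => cases k with
    | zero => omega
    | succ k => rfl
  | succ n ih => cases k with
    | zero => omega
    | succ k => rw [pathWeight, ih (by omega), ih (by omega)]; simp

lemma pathWeight_self (n : ℕ) : pathWeight n n = 1 := by
  induction n with
  | zero => rfl
  | succ n ih => rw [pathWeight, ih, pathWeight_eq_zero (by omega)]; simp

lemma downWeight_odd (m : ℕ) : downWeight (2 * m + 1) = X := by
  rw [downWeight, if_pos (by omega)]

lemma downWeight_even (m : ℕ) : downWeight (2 * m) = 1 := by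
  rw [downWeight, if_neg (by omega)]

lemma pathWeight_odd_of_even {h : ℕ}
    (ih : ∀ m, pathWeight (2 * h) (2 * m) = chooseSum h h m ∧
      pathWeight (2 * h) (2 * m + 1) = chooseSum h h (m + 1)) (m : ℕ) :
    pathWeight (2 * h + 1) (2 * m) = chooseSum (h + 1) h m ∧
      pathWeight (2 * h + 1) (2 * m + 1) = chooseSum h (h + 1) (m + 1) := by
  constructor
  · rw [chooseSum_succ_left]
    cases m with
    | zero =>
      have h0 := ih 0
      simp only [mul_zero, zero_add] at h0 ⊢
      rw [pathWeight, h0.1, h0.2, ← downWeight_odd 0]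
    | succ m =>
      rw [show 2 * (m + 1) = 2 * m + 1 + 1 by ring, pathWeight, (ih m).2,
        show 2 * m + 1 + 2 = 2 * (m + 1) + 1 by ring, (ih (m + 1)).2, downWeight_odd]
  · rw [chooseSum_succ_right, pathWeight, (ih m).1,
      show 2 * m + 2 = 2 * (m + 1) by ring, (ih (m + 1)).1, downWeight_even, one_mul]

lemma pathWeight_even (h m : ℕ) : pathWeight (2 * h) (2 * m) = chooseSum h h m ∧
      pathWeight (2 * h) (2 * m + 1) = chooseSum h h (m + 1) := by
  induction h generalizing m with
  | zero => cases m <;> simp [chooseSum, pathWeight, mul_add]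
  | succ h ih =>
    have ih_odd := pathWeight_odd_of_even ih
    rw [show 2 * (h + 1) = 2 * h + 1 + 1 by ring]
    constructor
    · rw [chooseSum_succ_left]
      cases m with
      | zero =>
        have h0 := ih_odd 0
        simp only [mul_zero, zero_add] at h0 ⊢
        rw [pathWeight, h0.1, h0.2, ← downWeight_odd 0, chooseSum_succ_self_zero]
      | succ m =>
        rw [show 2 * (m + 1) = 2 * m + 1 + 1 by ring, pathWeight, (ih_odd m).2,
          show 2 * m + 1 + 2 = 2 * (m + 1) + 1 by ring, (ih_odd (m + 1)).2, downWeight_odd]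
    · rw [chooseSum_succ_right, pathWeight, (ih_odd m).1,
        show 2 * m + 2 = 2 * (m + 1) by ring, (ih_odd (m + 1)).1, downWeight_even, one_mul]

lemma bpoly_eq_chooseSum (n : ℕ) : bpoly n = chooseSum (n / 2) ((n + 1) / 2) 0 := by
  simp [bpoly, chooseSum]

lemma pathWeight_zero (n : ℕ) : pathWeight n 0 = bpoly n := by
  rw [bpoly_eq_chooseSum]
  obtain ⟨h, rfl | rfl⟩ := Nat.even_or_odd' n
  · rw [show 2 * h / 2 = h by omega, show (2 * h + 1) / 2 = h by omega]
    exact (pathWeight_even h 0).1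
  · rw [show (2 * h + 1) / 2 = h by omega, show (2 * h + 1 + 1) / 2 = h + 1 by omega,
      ← chooseSum_succ_self_zero]
    exact (pathWeight_odd_of_even (pathWeight_even h) 0).1

/-- The squared norm `∏_{1 ≤ m ≤ k} downWeight m` of the `k`-th orthogonal polynomial. -/
noncomputable def normWeight (k : ℕ) : ℤ[X] := X ^ ((k + 1) / 2)

lemma normWeight_succ (k : ℕ) : normWeight (k + 1) = downWeight (k + 1) * normWeight k := by
  obtain ⟨m, rfl | rfl⟩ := Nat.even_or_odd' k
  · rw [downWeight_odd, normWeight, normWeight, show (2 * m + 1 + 1) / 2 = m + 1 by omega,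
      show (2 * m + 1) / 2 = m by omega, pow_succ']
  · rw [show 2 * m + 1 + 1 = 2 * (m + 1) by ring, downWeight_even, normWeight, normWeight,
      show (2 * (m + 1) + 1) / 2 = m + 1 by omega,
      show (2 * m + 1 + 1) / 2 = m + 1 by omega, one_mul]

/-- The defect of symmetry of the truncated Jacobi matrix: the sum telescopes to a boundary term. -/
lemma gram_shift_aux (i j N : ℕ) :
    ∑ k ∈ range (N + 1), pathWeight (i + 1) k * normWeight k * pathWeight j k
      = ∑ k ∈ range (N + 1), pathWeight i k * normWeight k * pathWeight (j + 1) k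
        + normWeight (N + 1) * (pathWeight i (N + 1) * pathWeight j N
          - pathWeight i N * pathWeight j (N + 1)) := by
  induction N with
  | zero =>
    simp only [zero_add, sum_range_one, pathWeight, normWeight_succ]
    ring
  | succ N ih =>
    rw [sum_range_succ _ (N + 1), ih, sum_range_succ _ (N + 1)]
    simp only [pathWeight, normWeight_succ]
    ring

lemma gram_eq (i j N : ℕ) (h : i + j ≤ N) :
    ∑ k ∈ range (N + 1), pathWeight i k * normWeight k * pathWeight j k = bpoly (i + j) := by
  induction i generalizing j with
  | zero =>
    rw [sum_range_succ', sum_eq_zero fun k _ => by simp [pathWeight]]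
    simp [pathWeight, normWeight, pathWeight_zero]
  | succ i ih =>
    rw [gram_shift_aux, ih _ (by omega), pathWeight_eq_zero (by omega : i < N + 1),
      pathWeight_eq_zero (by omega : j < N + 1), add_right_comm i 1 j, add_assoc i j 1]
    simp

lemma gram_eq_of_le (i j n : ℕ) (hi : i ≤ n) :
    ∑ k ∈ range (n + 1), pathWeight i k * normWeight k * pathWeight j k = bpoly (i + j) := by
  rw [← gram_eq i j (n + j) (by omega)]
  refine sum_subset (range_subset_range.2 (by omega)) fun k _ hk => ?_
  rw [mem_range] at hk
  rw [pathWeight_eq_zero (by omega)]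
  simp

/-- The value at `0` of the `k`-th monic orthogonal polynomial. -/
noncomputable def orthValue : ℕ → ℤ[X]
  | 0 => 1
  | 1 => -1
  | k + 2 => -downWeight (k + 1) * orthValue k

lemma sum_pathWeight_succ_mul_orthValue (i N : ℕ) :
    ∑ k ∈ range (N + 1), pathWeight (i + 1) k * orthValue k
      = downWeight (N + 1) * orthValue N * pathWeight i (N + 1)
        - orthValue (N + 1) * pathWeight i N := by
  induction N with
  | zero =>
    simp only [zero_add, sum_range_one, pathWeight, orthValue]
    ring
  | succ N ih =>
    rw [sum_range_succ, ih]
    simp only [pathWeight, orthValue]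
    ring

lemma sum_pathWeight_mul_orthValue (i n : ℕ) (hi : i ≤ n) :
    ∑ k ∈ range (n + 1), pathWeight i k * orthValue k = if i = 0 then 1 else 0 := by
  cases i with
  | zero =>
    rw [sum_range_succ', sum_eq_zero fun k _ => by simp [pathWeight]]
    simp [pathWeight, orthValue]
  | succ i =>
    rw [sum_pathWeight_succ_mul_orthValue, pathWeight_eq_zero (by omega : i < n + 1),
      pathWeight_eq_zero (by omega : i < n)]
    simp

lemma orthValue_sq (m : ℕ) :
    orthValue (2 * m) ^ 2 = X ^ (2 * m) ∧ orthValue (2 * m + 1) ^ 2 = 1 := by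
  induction m with
  | zero => simp [orthValue]
  | succ m ih =>
    rw [show 2 * (m + 1) = 2 * m + 2 by ring, show 2 * m + 2 + 1 = 2 * m + 1 + 2 by ring]
    simp only [orthValue]
    rw [mul_pow, mul_pow, ih.1, ih.2, downWeight_odd, show 2 * m + 1 + 1 = 2 * (m + 1) by ring,
      downWeight_even]
    constructor <;> ring

lemma prod_normWeight (n : ℕ) : ∏ k : Fin (n + 1), normWeight k = X ^ ((n + 1) ^ 2 / 4) := by
  induction n with
  | zero => simp [normWeight]
  | succ n ih =>
    rw [Fin.prod_univ_castSucc]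
    simp only [Fin.val_castSucc, Fin.val_last]
    rw [ih, normWeight, ← pow_add]
    congr 1
    obtain ⟨m, rfl | rfl⟩ := Nat.even_or_odd' n
    · rw [show (2 * m + 1) ^ 2 = 4 * (m ^ 2 + m) + 1 by ring,
        show (2 * m + 1 + 1) ^ 2 = 4 * (m ^ 2 + m + (m + 1)) by ring]
      omega
    · rw [show (2 * m + 1 + 1) ^ 2 = 4 * (m ^ 2 + 2 * m + 1) by ring,
        show (2 * m + 1 + 1 + 1) ^ 2 = 4 * (m ^ 2 + 2 * m + 1 + (m + 1)) + 1 by ring]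
      omega

lemma prod_erase_eq (n : ℕ) (k : Fin n) :
    ∏ m ∈ univ.erase k, normWeight m = ∏ m : Fin n, if m = k then 1 else normWeight m := by
  rw [← mul_prod_erase univ _ (mem_univ k), if_pos rfl, one_mul]
  exact prod_congr rfl fun m hm => by rw [if_neg (ne_of_mem_erase hm)]

lemma sum_orthValue_sq (n : ℕ) :
    ∑ k : Fin (n + 1), orthValue k ^ 2 * ∏ m ∈ univ.erase k, normWeight m
      = X ^ (n ^ 2 / 4) * ∑ j ∈ range (n + 1), X ^ j := by
  induction n with
  | zero => simp [orthValue]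
  | succ n ih =>
    have h1 : ∀ k : Fin (n + 1), ∏ m ∈ univ.erase k.castSucc, normWeight m
        = (∏ m ∈ univ.erase k, normWeight m) * normWeight (n + 1) := by
      intro k
      rw [prod_erase_eq, prod_erase_eq, Fin.prod_univ_castSucc]
      simp [(Fin.castSucc_ne_last _).symm]
    have h2 : ∏ m ∈ univ.erase (Fin.last (n + 1)), normWeight m = X ^ ((n + 1) ^ 2 / 4) := by
      rw [prod_erase_eq, Fin.prod_univ_castSucc, ← prod_normWeight]
      simp [Fin.castSucc_ne_last]
    rw [Fin.sum_univ_castSucc, h2]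
    simp only [h1, Fin.val_castSucc, Fin.val_last, ← mul_assoc]
    rw [← sum_mul, ih, normWeight]
    obtain ⟨m, rfl | rfl⟩ := Nat.even_or_odd' n
    · -- The new summand supplies the constant term `1`, and the others are shifted up by one.
      rw [(orthValue_sq m).2, sum_range_succ' _ (2 * m + 1),
        show (2 * m + 1) ^ 2 = 4 * (m ^ 2 + m) + 1 by ring,
        show (4 * (m ^ 2 + m) + 1) / 4 = m ^ 2 + m by omega,
        show (2 * m) ^ 2 = 4 * m ^ 2 by ring, show 4 * m ^ 2 / 4 = m ^ 2 by omega,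
        show (2 * m + 1 + 1) / 2 = m + 1 by omega]
      simp only [pow_succ _ (_ : ℕ), ← sum_mul]
      ring
    · -- The new summand supplies the top term.
      rw [show 2 * m + 1 + 1 = 2 * (m + 1) by ring, (orthValue_sq (m + 1)).1,
        sum_range_succ _ (2 * (m + 1)),
        show (2 * m + 1) ^ 2 = 4 * (m ^ 2 + m) + 1 by ring,
        show (4 * (m ^ 2 + m) + 1) / 4 = m ^ 2 + m by omega,
        show (2 * (m + 1)) ^ 2 = 4 * (m ^ 2 + 2 * m + 1) by ring,
        show 4 * (m ^ 2 + 2 * m + 1) / 4 = m ^ 2 + 2 * m + 1 by omega,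
        show (2 * (m + 1) + 1) / 2 = m + 1 by omega]
      ring

/-- The lower unitriangular matrix of the path weights. -/
noncomputable def pathMatrix (n : ℕ) : Matrix (Fin (n + 1)) (Fin (n + 1)) ℤ[X] :=
  Matrix.of fun i k => pathWeight i k

lemma det_pathMatrix (n : ℕ) : (pathMatrix n).det = 1 := by
  rw [Matrix.det_of_isLowerTriangular]
  · simp [pathMatrix, pathWeight_self]
  · intro i j hij
    exact pathWeight_eq_zero (by simpa using hij)

lemma hankel_eq (n : ℕ) :
    (Matrix.of fun i j : Fin (n + 1) => bpoly (i.val + j.val))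
      = pathMatrix n * Matrix.diagonal (fun k : Fin (n + 1) => normWeight k)
        * (pathMatrix n).transpose := by
  ext1 i j
  rw [Matrix.mul_apply]
  simp only [Matrix.mul_diagonal, Matrix.transpose_apply, pathMatrix, Matrix.of_apply]
  rw [Fin.sum_univ_eq_sum_range (fun k => pathWeight i k * normWeight k * pathWeight j k),
    gram_eq_of_le _ _ _ (by omega)]

/-- Column `0` of the adjugate of the path matrix solves `L *ᵥ v = e₀`. -/
lemma adjugate_pathMatrix (n : ℕ) (k : Fin (n + 1)) :
    (pathMatrix n).adjugate k 0 = orthValue k := by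
  have h : (pathMatrix n).mulVec (fun k => orthValue k) = Pi.single 0 1 := by
    ext1 i
    simp only [Matrix.mulVec, dotProduct, pathMatrix, Matrix.of_apply]
    rw [Fin.sum_univ_eq_sum_range (fun k => pathWeight i k * orthValue k),
      sum_pathWeight_mul_orthValue _ _ (by omega)]
    rw [Pi.single_apply]
    exact if_congr Fin.val_eq_zero_iff rfl rfl
  have hv := congrArg ((pathMatrix n).adjugate.mulVec) h
  rw [Matrix.mulVec_mulVec, Matrix.adjugate_mul, det_pathMatrix, one_smul, Matrix.one_mulVec,
    Matrix.mulVec_single_one] at hv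
  exact (congrFun hv k).symm

/-- For `n ≥ 1`, the `n×n` Hankel determinant `det(b_{2+i+j}(t))_{i,j=0}^{n-1}`
equals `t^(⌊n²/4⌋)·(1 + t + ⋯ + t^n)` in `ℤ[t]`. -/
theorem stmt18 (n : ℕ) (hn : 1 ≤ n) :
    Matrix.det (Matrix.of fun i j : Fin n => bpoly (2 + i.val + j.val))
      = Polynomial.X ^ (n ^ 2 / 4) * ∑ j ∈ Finset.range (n + 1), Polynomial.X ^ j := by
  have h : Matrix.det (Matrix.of fun i j : Fin n => bpoly (2 + i.val + j.val))
      = (Matrix.of fun i j : Fin (n + 1) => bpoly (i.val + j.val)).adjugate 0 0 := by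
    rw [Matrix.adjugate_fin_succ_eq_det_submatrix]
    simp only [Fin.val_zero, add_zero, pow_zero, one_mul]
    congr 1
    ext1 i j
    simp only [Matrix.submatrix_apply, Matrix.of_apply, Fin.succAbove_zero, Fin.val_succ]
    congr 1
    ring
  rw [h, hankel_eq, Matrix.adjugate_mul_distrib, Matrix.adjugate_mul_distrib,
    Matrix.adjugate_diagonal, ← Matrix.adjugate_transpose, ← sum_orthValue_sq,
    ← Matrix.mul_assoc, Matrix.mul_apply]
  refine sum_congr rfl fun k _ => ?_
  rw [Matrix.mul_diagonal, Matrix.transpose_apply, adjugate_pathMatrix]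
  ring
end
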